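/- Fix d ≥ 1 and identify M(ℂ^{d²}) with M(ℂ^d) ⊗ M(ℂ^d), with partial trace over the first factor Tr₁(X)_{j,j'} = ∑_i X_{(i,j),(i,j')}. For any X ∈ M(ℂ^{d²}) define X♯ = X + (1/d) 𝟙_d ⊗ ( (1/d)𝟙_d − Tr₁(X) ). Then Tr₁(X♯) = (1/d)𝟙_d, and for every X' ∈ M(ℂ^{d²}) with Tr₁(X') = (1/d)𝟙_d one has ‖X − X♯‖₂ ≤ ‖X − X'‖₂, with equality if and only if X' = X♯; i.e., X♯ is the unique Frobenius-norm projection of X onto the trace-preserving hyperplane 𝒯𝒫 = { X' : Tr₁(X') = (1/d)𝟙_d }. -/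

import Mathlib

noncomputable section
open Matrix Kronecker BigOperators
open scoped ComplexOrder

/-- The Frobenius (Hilbert–Schmidt) norm `‖A‖₂ = √Tr(AᴴA)` of a complex matrix. -/
def frobNorm {n : Type*} [Fintype n] (A : Matrix n n ℂ) : ℝ :=
  Real.sqrt (Matrix.trace (Aᴴ * A)).re

/-- The operator norm `‖A‖_∞` (largest singular value) of a complex matrix. -/
def opNorm {n : Type*} [Fintype n] [DecidableEq n] (A : Matrix n n ℂ) : ℝ :=
  ‖Matrix.toEuclideanCLM (𝕜 := ℂ) A‖

/-- The trace norm `‖A‖₁ = Tr √(AᴴA)` of a complex matrix. -/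
def traceNorm {n : Type*} [Fintype n] [DecidableEq n] (A : Matrix n n ℂ) : ℝ :=
  (open scoped MatrixOrder in CFC.sqrt (Aᴴ * A)).trace.re

/-- A density matrix: positive semidefinite with trace one. -/
def IsDensity {n : Type*} [Fintype n] (ρ : Matrix n n ℂ) : Prop :=
  ρ.PosSemidef ∧ ρ.trace = 1

/-- A density matrix `ρ` is `δ`-almost rank `r` if there is a density matrix of rank at most `r`
within operator-norm distance `δ` of it. -/
def AlmostRank {n : Type*} [Fintype n] [DecidableEq n] (r : ℕ) (δ : ℝ) (ρ : Matrix n n ℂ) : Prop :=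
  ∃ σ : Matrix n n ℂ, IsDensity σ ∧ σ.rank ≤ r ∧ opNorm (ρ - σ) ≤ δ

/-- The rank-one (outer-product) matrix `|v⟩⟨v|`. -/
def outer {n : Type*} (v : EuclideanSpace ℂ n) : Matrix n n ℂ :=
  Matrix.of fun i j => v i * (starRingEnd ℂ) (v j)

/-- Partial trace over the first tensor factor. -/
def ptrace1 {d : ℕ} (X : Matrix (Fin d × Fin d) (Fin d × Fin d) ℂ) : Matrix (Fin d) (Fin d) ℂ :=
  Matrix.of fun j j' => ∑ i, X (i, j) (i, j')

/-- Partial trace over the second tensor factor. -/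
def ptrace2 {d : ℕ} (X : Matrix (Fin d × Fin d) (Fin d × Fin d) ℂ) : Matrix (Fin d) (Fin d) ℂ :=
  Matrix.of fun i i' => ∑ j, X (i, j) (i', j)

/-- A family of `m` rank-one projectors, each given by a unit vector. -/
def IsRankOneProjFamily {d m : ℕ} (P : Fin m → Matrix (Fin d) (Fin d) ℂ) : Prop :=
  ∀ l, ∃ v : EuclideanSpace ℂ (Fin d), ‖v‖ = 1 ∧ P l = outer v

/-- Near-isotropy: `∑ l, Tr(P l · A) • P l = A + Tr(A) • 𝟙` for every `A`. -/
def NearIsotropic {d m : ℕ} (P : Fin m → Matrix (Fin d) (Fin d) ℂ) : Prop :=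
  ∀ A : Matrix (Fin d) (Fin d) ℂ,
    ∑ l, Matrix.trace (P l * A) • P l = A + Matrix.trace A • (1 : Matrix (Fin d) (Fin d) ℂ)

/-- The affine projection `X ↦ X♯ = X + (1/d) 𝟙_d ⊗ ((1/d)𝟙_d − Tr₁(X))` onto the
trace-preserving hyperplane. -/
def tpProj (d : ℕ) (X : Matrix (Fin d × Fin d) (Fin d × Fin d) ℂ) :
    Matrix (Fin d × Fin d) (Fin d × Fin d) ℂ :=
  X + (1 / (d : ℂ)) • ((1 : Matrix (Fin d) (Fin d) ℂ) ⊗ₖ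
    ((1 / (d : ℂ)) • (1 : Matrix (Fin d) (Fin d) ℂ) - ptrace1 X))

/-!
The matrices with vanishing partial trace form the orthogonal complement of `{𝟙 ⊗ B}` for the
Hilbert–Schmidt inner product, because `Tr((𝟙 ⊗ B) Y) = Tr(B Tr₁(Y))`. Since `X - X♯` has the form
`𝟙 ⊗ B`, it is orthogonal to `X♯ - X'` for every `X'` in the hyperplane, and Pythagoras gives
`‖X - X'‖₂² = ‖X - X♯‖₂² + ‖X♯ - X'‖₂²`.
-/

section FrobeniusNorm

variable {n : Type*} [Fintype n]

theorem frobNorm_nonneg (A : Matrix n n ℂ) : 0 ≤ frobNorm A :=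
  Real.sqrt_nonneg _

theorem frobNorm_sq (A : Matrix n n ℂ) : frobNorm A ^ 2 = (trace (Aᴴ * A)).re :=
  Real.sq_sqrt (Complex.nonneg_iff.1 (posSemidef_conjTranspose_mul_self A).trace_nonneg).1

theorem frobNorm_eq_zero_iff {A : Matrix n n ℂ} : frobNorm A = 0 ↔ A = 0 := by
  have him : (trace (Aᴴ * A)).im = 0 :=
    (Complex.nonneg_iff.1 (posSemidef_conjTranspose_mul_self A).trace_nonneg).2.symm
  rw [← sq_eq_zero_iff, frobNorm_sq, ← trace_conjTranspose_mul_self_eq_zero_iff]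
  exact ⟨fun hre => Complex.ext hre him, fun h => by rw [h, Complex.zero_re]⟩

/-- Orthogonality for the Hilbert–Schmidt inner product `⟨A, B⟩ = Tr(AᴴB)`, the one that induces
`frobNorm`. -/
def FrobOrthogonal (A B : Matrix n n ℂ) : Prop :=
  trace (Aᴴ * B) = 0

theorem FrobOrthogonal.frobNorm_add_sq {A B : Matrix n n ℂ}
    (h : FrobOrthogonal A B) : frobNorm (A + B) ^ 2 = frobNorm A ^ 2 + frobNorm B ^ 2 := by
  have hAB : trace (Aᴴ * B) = 0 := h
  have hBA : trace (Bᴴ * A) = 0 := by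
    rw [← conjTranspose_conjTranspose A, ← conjTranspose_mul, trace_conjTranspose, hAB, star_zero]
  simp only [frobNorm_sq, conjTranspose_add, Matrix.add_mul, Matrix.mul_add, trace_add,
    Complex.add_re, hAB, hBA, add_zero, zero_add]

theorem FrobOrthogonal.frobNorm_le_frobNorm_add {A B : Matrix n n ℂ}
    (h : FrobOrthogonal A B) : frobNorm A ≤ frobNorm (A + B) := by
  refine le_of_sq_le_sq ?_ (frobNorm_nonneg _)
  rw [h.frobNorm_add_sq]
  exact le_add_of_nonneg_right (sq_nonneg _)

theorem FrobOrthogonal.frobNorm_eq_frobNorm_add_iff {A B : Matrix n n ℂ}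
    (h : FrobOrthogonal A B) : frobNorm A = frobNorm (A + B) ↔ B = 0 := by
  rw [← sq_eq_sq₀ (frobNorm_nonneg _) (frobNorm_nonneg _),
    h.frobNorm_add_sq, left_eq_add, sq_eq_zero_iff, frobNorm_eq_zero_iff]

end FrobeniusNorm

section PartialTrace

variable {d : ℕ}

theorem ptrace1_sub (X Y : Matrix (Fin d × Fin d) (Fin d × Fin d) ℂ) :
    ptrace1 (X - Y) = ptrace1 X - ptrace1 Y := by
  ext j j'
  simp only [ptrace1, of_apply, Matrix.sub_apply, Finset.sum_sub_distrib]

theorem ptrace1_kronecker (A B : Matrix (Fin d) (Fin d) ℂ) :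
    ptrace1 (A ⊗ₖ B) = trace A • B := by
  ext j j'
  simp only [ptrace1, of_apply, kronecker_apply, ← Finset.sum_mul, Matrix.smul_apply,
    smul_eq_mul, trace, diag_apply]

theorem trace_one_kronecker_mul (B : Matrix (Fin d) (Fin d) ℂ)
    (Y : Matrix (Fin d × Fin d) (Fin d × Fin d) ℂ) :
    trace ((1 ⊗ₖ B) * Y) = trace (B * ptrace1 Y) := by
  calc trace ((1 ⊗ₖ B) * Y)
      = ∑ i, ∑ j, ∑ k, B j k * Y (i, k) (i, j) := by
        simp [trace, mul_apply, Fintype.sum_prod_type, one_apply]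
    _ = ∑ j, ∑ k, ∑ i, B j k * Y (i, k) (i, j) := by
        rw [Finset.sum_comm]
        exact Finset.sum_congr rfl fun j _ => Finset.sum_comm
    _ = trace (B * ptrace1 Y) := by
        simp only [trace, diag_apply, mul_apply, ptrace1, of_apply, Finset.mul_sum]

theorem frobOrthogonal_one_kronecker_of_ptrace1_eq_zero (B : Matrix (Fin d) (Fin d) ℂ)
    {Y : Matrix (Fin d × Fin d) (Fin d × Fin d) ℂ} (hY : ptrace1 Y = 0) :
    FrobOrthogonal (1 ⊗ₖ B) Y := by
  rw [FrobOrthogonal, conjTranspose_kronecker, conjTranspose_one, trace_one_kronecker_mul, hY,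
    Matrix.mul_zero, trace_zero]

theorem sub_tpProj (X : Matrix (Fin d × Fin d) (Fin d × Fin d) ℂ) :
    X - tpProj d X = 1 ⊗ₖ ((1 / (d : ℂ)) • (ptrace1 X - (1 / (d : ℂ)) • 1)) := by
  rw [tpProj, sub_add_cancel_left, neg_eq_iff_add_eq_zero, ← kronecker_smul, ← kronecker_add,
    ← smul_add, sub_add_sub_cancel, sub_self, smul_zero, kronecker_zero]

theorem ptrace1_tpProj (hd : d ≠ 0) (X : Matrix (Fin d × Fin d) (Fin d × Fin d) ℂ) :
    ptrace1 (tpProj d X) = (1 / (d : ℂ)) • 1 := by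
  have hd' : (d : ℂ) ≠ 0 := Nat.cast_ne_zero.2 hd
  have h : ptrace1 X - ptrace1 (tpProj d X) = ptrace1 X - (1 / (d : ℂ)) • 1 := by
    rw [← ptrace1_sub, sub_tpProj, ptrace1_kronecker, trace_one, Fintype.card_fin, smul_smul,
      mul_one_div_cancel hd', one_smul]
  exact sub_right_injective h

end PartialTrace

/-- Proposition 3: `X♯` lies on the trace-preserving hyperplane
`𝒯𝒫 = {X' : Tr₁(X') = (1/d)𝟙_d}` and is the unique Frobenius-norm projection of `X` onto it. -/
theorem tpProj_is_unique_projection (d : ℕ) (hd : 1 ≤ d)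
    (X : Matrix (Fin d × Fin d) (Fin d × Fin d) ℂ) :
    ptrace1 (tpProj d X) = (1 / (d : ℂ)) • (1 : Matrix (Fin d) (Fin d) ℂ) ∧
    ∀ X' : Matrix (Fin d × Fin d) (Fin d × Fin d) ℂ,
      ptrace1 X' = (1 / (d : ℂ)) • (1 : Matrix (Fin d) (Fin d) ℂ) →
      frobNorm (X - tpProj d X) ≤ frobNorm (X - X') ∧
      (frobNorm (X - tpProj d X) = frobNorm (X - X') ↔ X' = tpProj d X) := by
  have hproj := ptrace1_tpProj (Nat.one_le_iff_ne_zero.1 hd) X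
  refine ⟨hproj, fun X' hX' => ?_⟩
  have hdiff : ptrace1 (tpProj d X - X') = 0 := by
    rw [ptrace1_sub, hproj, hX', sub_self]
  have horth : FrobOrthogonal (X - tpProj d X) (tpProj d X - X') := by
    rw [sub_tpProj]
    exact frobOrthogonal_one_kronecker_of_ptrace1_eq_zero _ hdiff
  rw [← sub_add_sub_cancel X (tpProj d X) X']
  refine ⟨horth.frobNorm_le_frobNorm_add, ?_⟩
  rw [horth.frobNorm_eq_frobNorm_add_iff, sub_eq_zero, eq_comm]
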